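/- Let A be a unital complex Banach algebra and let e ∈ A be invertible with ‖e‖ ≤ 1 (so A_e is unital). If A_e is approximately biprojective — i.e. there exists a net of continuous linear maps σ_i : A → A⊗A such that for all a, b ∈ A: (a·e)·σ_i(b) − σ_i(a·e·b) → 0 and σ_i(a·e·b) − σ_i(a)·(e·b) → 0 in A⊗A, and π_e(σ_i(a)) → a in A, where π_e(x⊗y) = x·e·y — then A is approximately biprojective: there exists a net of continuous linear maps ρ_i : A → A⊗A such that for all a, b ∈ A: a·ρ_i(b) − ρ_i(ab) → 0 and ρ_i(ba) − ρ_i(b)·a → 0 in A⊗A, and π_A(ρ_i(a)) → a in A. -/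

import Mathlib

open Filter Topology TensorProduct

/-- The projective tensor seminorm on the algebraic tensor product `A ⊗[ℂ] A`:
the infimum of `∑ ‖xᵢ‖‖yᵢ‖` over all representations `z = ∑ xᵢ ⊗ yᵢ`. -/
noncomputable def projSN {A : Type*} [NormedRing A] [NormedAlgebra ℂ A]
    (z : TensorProduct ℂ A A) : ℝ :=
  sInf {r : ℝ | ∃ (n : ℕ) (x y : Fin n → A),
    z = ∑ i, x i ⊗ₜ[ℂ] y i ∧ r = ∑ i, ‖x i‖ * ‖y i‖}

/-!
Put `ρᵢ = (id ⊗ L_e) ∘ σᵢ`, where `L_e` is left multiplication by `e`. The map `id ⊗ L_e` is bounded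
for the projective seminorm, is an `A`-bimodule map, and satisfies `π_A ∘ (id ⊗ L_e) = π_e`. Since
`e` is invertible with inverse `f`, every `a` is both `(a * f) * e` and `e * (f * a)`, so the
approximate module identities of `σᵢ` over `A_e` hold for the multipliers `a` themselves.
-/

theorem exists_fin_sum_tmul {R M N : Type*} [CommSemiring R] [AddCommMonoid M] [AddCommMonoid N]
    [Module R M] [Module R N] (z : M ⊗[R] N) :
    ∃ (n : ℕ) (x : Fin n → M) (y : Fin n → N), z = ∑ i, x i ⊗ₜ[R] y i := by
  obtain ⟨S, rfl⟩ := TensorProduct.exists_finset z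
  refine ⟨S.card, fun i => (S.equivFin.symm i).1.1, fun i => (S.equivFin.symm i).1.2, ?_⟩
  rw [S.equivFin.symm.sum_comp fun p : S => p.1.1 ⊗ₜ[R] p.1.2]
  exact (S.sum_coe_sort fun p => p.1 ⊗ₜ[R] p.2).symm

theorem lTensor_rTensor_comm {R M M' N N' : Type*} [CommSemiring R] [AddCommMonoid M]
    [AddCommMonoid M'] [AddCommMonoid N] [AddCommMonoid N'] [Module R M] [Module R M']
    [Module R N] [Module R N'] (g : N →ₗ[R] N') (f : M →ₗ[R] M') (z : M ⊗[R] N) :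
    LinearMap.lTensor M' g (LinearMap.rTensor N f z) =
      LinearMap.rTensor N' f (LinearMap.lTensor M g z) := by
  rw [← LinearMap.comp_apply, ← LinearMap.comp_apply, LinearMap.lTensor_comp_rTensor,
    LinearMap.rTensor_comp_lTensor]

theorem lTensor_mulLeft_lTensor_mulRight {R M A : Type*} [CommSemiring R] [AddCommMonoid M]
    [Module R M] [NonUnitalSemiring A] [Module R A] [SMulCommClass R A A] [IsScalarTower R A A]
    (a b : A) (z : M ⊗[R] A) :
    LinearMap.lTensor M (LinearMap.mulLeft R a) (LinearMap.lTensor M (LinearMap.mulRight R b) z) =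
      LinearMap.lTensor M (LinearMap.mulRight R b)
        (LinearMap.lTensor M (LinearMap.mulLeft R a) z) := by
  rw [← LinearMap.lTensor_comp_apply, ← LinearMap.lTensor_comp_apply]
  exact congrArg (LinearMap.lTensor M · z) (LinearMap.commute_mulLeft_right a b).eq

section ProjSN

variable {A B : Type*} [NormedRing A] [NormedAlgebra ℂ A] [NormedRing B] [NormedAlgebra ℂ B]

theorem projSN_nonneg (z : A ⊗[ℂ] A) : 0 ≤ projSN z := by
  apply Real.sInf_nonneg
  rintro _ ⟨n, x, y, -, rfl⟩
  positivity

theorem projSN_sum_tmul_le {n : ℕ} (x y : Fin n → A) :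
    projSN (∑ i, x i ⊗ₜ[ℂ] y i) ≤ ∑ i, ‖x i‖ * ‖y i‖ := by
  refine csInf_le ⟨0, ?_⟩ ⟨n, x, y, rfl, rfl⟩
  rintro _ ⟨m, u, v, -, rfl⟩
  positivity

theorem le_mul_projSN {r C : ℝ} (hC : 0 ≤ C) {z : A ⊗[ℂ] A}
    (h : ∀ (n : ℕ) (x y : Fin n → A), z = ∑ i, x i ⊗ₜ[ℂ] y i → r ≤ C * ∑ i, ‖x i‖ * ‖y i‖) :
    r ≤ C * projSN z := by
  obtain ⟨n, x, y, hz⟩ := exists_fin_sum_tmul z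
  rw [projSN, ← smul_eq_mul, ← Real.sInf_smul_of_nonneg hC]
  refine le_csInf (Set.Nonempty.smul_set ⟨_, n, x, y, hz, rfl⟩) ?_
  rintro _ ⟨_, ⟨m, u, v, hz, rfl⟩, rfl⟩
  exact h m u v hz

theorem projSN_map_le (S T : A →L[ℂ] B) (z : A ⊗[ℂ] A) :
    projSN (TensorProduct.map (S : A →ₗ[ℂ] B) (T : A →ₗ[ℂ] B) z) ≤ ‖S‖ * ‖T‖ * projSN z := by
  refine le_mul_projSN (by positivity) ?_
  rintro n x y rfl
  calc projSN (TensorProduct.map (S : A →ₗ[ℂ] B) (T : A →ₗ[ℂ] B) (∑ i, x i ⊗ₜ[ℂ] y i))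
      = projSN (∑ i, S (x i) ⊗ₜ[ℂ] T (y i)) := by simp
    _ ≤ ∑ i, ‖S (x i)‖ * ‖T (y i)‖ := projSN_sum_tmul_le _ _
    _ ≤ ∑ i, (‖S‖ * ‖x i‖) * (‖T‖ * ‖y i‖) := by gcongr <;> apply ContinuousLinearMap.le_opNorm
    _ = ‖S‖ * ‖T‖ * ∑ i, ‖x i‖ * ‖y i‖ := by simp only [Finset.mul_sum, mul_mul_mul_comm]

theorem projSN_lTensor_mulLeft_le (a : A) (z : A ⊗[ℂ] A) :
    projSN (LinearMap.lTensor A (LinearMap.mulLeft ℂ a) z) ≤ ‖a‖ * projSN z := by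
  have hz := projSN_nonneg z
  calc projSN (LinearMap.lTensor A (LinearMap.mulLeft ℂ a) z)
      ≤ ‖ContinuousLinearMap.id ℂ A‖ * ‖ContinuousLinearMap.mul ℂ A a‖ * projSN z :=
        projSN_map_le (ContinuousLinearMap.id ℂ A) (ContinuousLinearMap.mul ℂ A a) z
    _ ≤ 1 * ‖a‖ * projSN z := by
        gcongr
        · exact ContinuousLinearMap.norm_id_le
        · exact ContinuousLinearMap.opNorm_mul_apply_le ℂ A a
    _ = ‖a‖ * projSN z := by rw [one_mul]

theorem tendsto_projSN_lTensor_mulLeft {ι : Type*} {l : Filter ι} {z : ι → A ⊗[ℂ] A}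
    (hz : Tendsto (fun i => projSN (z i)) l (𝓝 0)) (a : A) :
    Tendsto (fun i => projSN (LinearMap.lTensor A (LinearMap.mulLeft ℂ a) (z i))) l (𝓝 0) :=
  squeeze_zero (fun _ => projSN_nonneg _) (fun i => projSN_lTensor_mulLeft_le a (z i))
    (by simpa using hz.const_mul ‖a‖)

end ProjSN

theorem stmt11_general.{u, v} {A : Type u} [NormedRing A] [NormedAlgebra ℂ A]
    (e f : A) (hef : e * f = 1) (hfe : f * e = 1)
    (hAe : ∃ (ι : Type v) (l : Filter ι), l.NeBot ∧
      ∃ σ : ι → (A →ₗ[ℂ] TensorProduct ℂ A A),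
        (∀ i, ∃ C : ℝ, ∀ a : A, projSN (σ i a) ≤ C * ‖a‖) ∧
        (∀ a b : A, Tendsto
          (fun i => projSN (LinearMap.rTensor A (LinearMap.mulLeft ℂ (a * e)) (σ i b) -
            σ i (a * e * b))) l (𝓝 0)) ∧
        (∀ a b : A, Tendsto
          (fun i => projSN (σ i (a * e * b) -
            LinearMap.lTensor A (LinearMap.mulRight ℂ (e * b)) (σ i a))) l (𝓝 0)) ∧
        (∀ a : A, Tendsto
          (fun i => ‖LinearMap.mul' ℂ A
            (LinearMap.lTensor A (LinearMap.mulLeft ℂ e) (σ i a)) - a‖) l (𝓝 0))) :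
    ∃ (ι : Type v) (l : Filter ι), l.NeBot ∧
      ∃ ρ : ι → (A →ₗ[ℂ] TensorProduct ℂ A A),
        (∀ i, ∃ C : ℝ, ∀ a : A, projSN (ρ i a) ≤ C * ‖a‖) ∧
        (∀ a b : A, Tendsto
          (fun i => projSN (LinearMap.rTensor A (LinearMap.mulLeft ℂ a) (ρ i b) -
            ρ i (a * b))) l (𝓝 0)) ∧
        (∀ a b : A, Tendsto
          (fun i => projSN (ρ i (b * a) -
            LinearMap.lTensor A (LinearMap.mulRight ℂ a) (ρ i b))) l (𝓝 0)) ∧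
        (∀ a : A, Tendsto
          (fun i => ‖LinearMap.mul' ℂ A (ρ i a) - a‖) l (𝓝 0)) := by
  obtain ⟨ι, l, hl, σ, hbound, hleft, hright, hπ⟩ := hAe
  refine ⟨ι, l, hl, fun i => LinearMap.lTensor A (LinearMap.mulLeft ℂ e) ∘ₗ σ i,
    fun i => ?_, fun a b => ?_, fun a b => ?_, hπ⟩
  · obtain ⟨C, hC⟩ := hbound i
    refine ⟨‖e‖ * C, fun a => (projSN_lTensor_mulLeft_le e (σ i a)).trans ?_⟩
    rw [mul_assoc]
    exact mul_le_mul_of_nonneg_left (hC a) (norm_nonneg e)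
  · have haf : a * f * e = a := by rw [mul_assoc, hfe, mul_one]
    have key := tendsto_projSN_lTensor_mulLeft (hleft (a * f) b) e
    simpa only [haf, map_sub, lTensor_rTensor_comm, LinearMap.comp_apply] using key
  · have hfa : e * (f * a) = a := by rw [← mul_assoc, hef, one_mul]
    have key := tendsto_projSN_lTensor_mulLeft (hright b (f * a)) e
    simpa only [mul_assoc b, hfa, map_sub, lTensor_mulLeft_lTensor_mulRight,
      LinearMap.comp_apply] using key

/-- Let `A` be a unital complex Banach algebra and `e ∈ A`
invertible (with inverse `f`) with `‖e‖ ≤ 1`.  If `A_e` is approximately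
biprojective (a net of continuous linear maps `σᵢ : A → A ⊗ A` with
`(a*e)·σᵢ(b) − σᵢ(a*e*b) → 0`, `σᵢ(a*e*b) − σᵢ(a)·(e*b) → 0` in the projective
tensor seminorm and `π_e(σᵢ(a)) → a`, `π_e (x ⊗ y) = x*e*y`), then `A` is
approximately biprojective.
(Continuity of a linear map into `A ⊗ A` is expressed as boundedness for the
projective seminorm.) -/
theorem stmt11 {A : Type*} [NormedRing A] [NormedAlgebra ℂ A] [CompleteSpace A]
    (e f : A) (he : ‖e‖ ≤ 1) (hef : e * f = 1) (hfe : f * e = 1)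
    (hAe : ∃ (ι : Type) (l : Filter ι), l.NeBot ∧
      ∃ σ : ι → (A →ₗ[ℂ] TensorProduct ℂ A A),
        (∀ i, ∃ C : ℝ, ∀ a : A, projSN (σ i a) ≤ C * ‖a‖) ∧
        (∀ a b : A, Tendsto
          (fun i => projSN (LinearMap.rTensor A (LinearMap.mulLeft ℂ (a * e)) (σ i b) -
            σ i (a * e * b))) l (𝓝 0)) ∧
        (∀ a b : A, Tendsto
          (fun i => projSN (σ i (a * e * b) -
            LinearMap.lTensor A (LinearMap.mulRight ℂ (e * b)) (σ i a))) l (𝓝 0)) ∧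
        (∀ a : A, Tendsto
          (fun i => ‖LinearMap.mul' ℂ A
            (LinearMap.lTensor A (LinearMap.mulLeft ℂ e) (σ i a)) - a‖) l (𝓝 0))) :
    ∃ (ι : Type) (l : Filter ι), l.NeBot ∧
      ∃ ρ : ι → (A →ₗ[ℂ] TensorProduct ℂ A A),
        (∀ i, ∃ C : ℝ, ∀ a : A, projSN (ρ i a) ≤ C * ‖a‖) ∧
        (∀ a b : A, Tendsto
          (fun i => projSN (LinearMap.rTensor A (LinearMap.mulLeft ℂ a) (ρ i b) -
            ρ i (a * b))) l (𝓝 0)) ∧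
        (∀ a b : A, Tendsto
          (fun i => projSN (ρ i (b * a) -
            LinearMap.lTensor A (LinearMap.mulRight ℂ a) (ρ i b))) l (𝓝 0)) ∧
        (∀ a : A, Tendsto
          (fun i => ‖LinearMap.mul' ℂ A (ρ i a) - a‖) l (𝓝 0)) :=
  stmt11_general e f hef hfe hAe
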